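/- Let V be a finite-dimensional real vector space, let a : V × V → ℝ be a symmetric positive definite bilinear form, let V_1, …, V_J be subspaces of V with V = V_1 + ⋯ + V_J, and let P = P_1 + ⋯ + P_J, where P_j is the a-orthogonal projection onto V_j. Then P is invertible and for every v ∈ V, a(P^{-1}v, v) = min{ Σ_{j=1}^J a(v_j, v_j) : v_j ∈ V_j for each j and v_1 + ⋯ + v_J = v }. -/

import Mathlib

/-- Lions' lemma: the additive Schwarz operator `P = Σ_j P_j` (sum of the
`a`-orthogonal projections onto subspaces spanning `V`) is invertible, and for every
`v`, `a(P⁻¹v, v)` is the minimum of `Σ_j a(v_j, v_j)` over all decompositions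
`v = Σ_j v_j` with `v_j ∈ V_j`. -/
theorem stmt_9
    {V : Type*} [AddCommGroup V] [Module ℝ V] [FiniteDimensional ℝ V]
    (a : V →ₗ[ℝ] V →ₗ[ℝ] ℝ)
    (hsymm : ∀ u v : V, a u v = a v u)
    (hpos : ∀ v : V, v ≠ 0 → 0 < a v v)
    (J : ℕ) (Vs : Fin J → Submodule ℝ V)
    (hspan : (⨆ j, Vs j) = ⊤)
    (P : Fin J → (V →ₗ[ℝ] V))
    (hPmem : ∀ j (v : V), P j v ∈ Vs j)
    (hPortho : ∀ j (v : V), ∀ w ∈ Vs j, a (v - P j v) w = 0) :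
    Function.Bijective (∑ j, P j) ∧
    ∀ v w : V, (∑ j, P j) w = v →
      IsLeast {s : ℝ | ∃ vs : Fin J → V,
          (∀ j, vs j ∈ Vs j) ∧ (∑ j, vs j = v) ∧ s = ∑ j, a (vs j) (vs j)}
        (a w v) := by
  have key : ∀ j (w u : V), u ∈ Vs j → a w u = a (P j w) u := by
    intro j w u hu
    have h := hPortho j w u hu
    rw [map_sub, LinearMap.sub_apply] at h
    linarith
  have hnn : ∀ v : V, 0 ≤ a v v := by
    intro v
    by_cases h : v = 0
    · simp [h]
    · exact (hpos v h).le
  have henergy : ∀ w : V, a w ((∑ j, P j) w) = ∑ j, a (P j w) (P j w) := by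
    intro w
    rw [LinearMap.sum_apply, map_sum]
    exact Finset.sum_congr rfl fun j _ => key j w _ (hPmem j w)
  have hinj : Function.Injective ⇑(∑ j, P j : V →ₗ[ℝ] V) := by
    rw [injective_iff_map_eq_zero]
    intro w hw
    have h0 := henergy w
    rw [hw, map_zero] at h0
    have h1 := (Finset.sum_eq_zero_iff_of_nonneg (fun j _ => hnn (P j w))).1 h0.symm
    have h2 : ∀ j, P j w = 0 := by
      intro j
      by_contra hne
      exact (hpos _ hne).ne' (h1 j (Finset.mem_univ j))
    have h3 : (⨆ j, Vs j) ≤ LinearMap.ker (a w) := by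
      refine iSup_le fun j u hu => ?_
      rw [LinearMap.mem_ker, key j w u hu, h2 j]
      simp
    rw [hspan] at h3
    by_contra hne
    exact (hpos _ hne).ne' (LinearMap.mem_ker.1 (h3 (Submodule.mem_top (x := w))))
  have hcoe : (∑ j, ⇑(P j) : V → V) = ⇑(∑ j, P j : V →ₗ[ℝ] V) := by
    funext x
    rw [LinearMap.sum_apply, Finset.sum_apply]
  refine ⟨hcoe ▸ ⟨hinj, LinearMap.injective_iff_surjective.1 hinj⟩, ?_⟩
  intro v w hw
  have hE := henergy w
  rw [hw] at hE
  constructor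
  · refine ⟨fun j => P j w, fun j => hPmem j w, ?_, hE⟩
    rw [← hw, LinearMap.sum_apply]
  · rintro s ⟨vs, hvs, hsum, rfl⟩
    have hC : a w v = ∑ j, a (P j w) (vs j) := by
      rw [← hsum, map_sum]
      exact Finset.sum_congr rfl fun j _ => key j w _ (hvs j)
    have hN : 0 ≤ ∑ j, a (vs j - P j w) (vs j - P j w) :=
      Finset.sum_nonneg fun j _ => hnn _
    have hX : ∑ j, a (vs j - P j w) (vs j - P j w)
        = ∑ j, a (vs j) (vs j) - 2 * ∑ j, a (P j w) (vs j) + ∑ j, a (P j w) (P j w) := by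
      rw [Finset.mul_sum, ← Finset.sum_sub_distrib, ← Finset.sum_add_distrib]
      refine Finset.sum_congr rfl fun j _ => ?_
      simp only [map_sub, LinearMap.sub_apply]
      rw [hsymm (vs j) (P j w)]
      ring
    rw [hX, ← hC, ← hE] at hN
    linarith
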